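/- For every f ∈ C([a,b]), every positive integer N, and every h > 0: f(t_{−N}^SE) − β_N(f) = (f(t_N^SE) − f(t_{−N}^SE))/(e^{Nh} − 1) and f(t_N^SE) − γ_N(f) = (f(t_{−N}^SE) − f(t_N^SE))/(e^{Nh} − 1); in particular, |f(t_{−N}^SE) − β_N(f)| ≤ 2‖f‖/(e^{Nh} − 1) and |f(t_N^SE) − γ_N(f)| ≤ 2‖f‖/(e^{Nh} − 1), where ‖f‖ = max_{t∈[a,b]}|f(t)|. -/

import Mathlib

/-!
With `E = exp (N h)`, the identity `(1 + tanh (x/2))/2 = exp x / (exp x + 1)` gives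
`ω_b(t_N) = ω_a(t_{-N}) = E/(E+1)` and `ω_a(t_N) = ω_b(t_{-N}) = 1/(E+1)`
(`omB_tSE`, `omA_tSE`), hence `Δ_N = (E-1)/(E+1)`, which is nonzero because `N h > 0`.
Substituting, `β_N(f) = (E f(t_{-N}) - f(t_N))/(E-1)` and symmetrically for `γ_N(f)`, so both
identities are rational-function identities in `E`. The bounds follow from the triangle
inequality, as the nodes lie in `[a,b]`.
-/

namespace SincVolterra

noncomputable section

/-- The sine integral `Si(x) = ∫₀ˣ (sin τ)/τ dτ`. -/
def Si (x : ℝ) : ℝ := ∫ τ in (0:ℝ)..x, Real.sin τ / τ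

/-- The Sinc function `S(j,h)(x)`. -/
def sincF (j : ℤ) (h x : ℝ) : ℝ :=
  if x = (j : ℝ) * h then 1
  else Real.sin (Real.pi * (x - (j : ℝ) * h) / h) / (Real.pi * (x - (j : ℝ) * h) / h)

/-- `J(j,h)(x) = h (1/2 + (1/π) Si(π(x - jh)/h))`. -/
def Jfun (j : ℤ) (h x : ℝ) : ℝ :=
  h * (1/2 + (1/Real.pi) * Si (Real.pi * (x - (j : ℝ) * h) / h))

/-- The tanh (SE) transformation. -/
def psiSE (a b x : ℝ) : ℝ := (b - a)/2 * Real.tanh (x/2) + (b + a)/2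

/-- The inverse of the SE transformation. -/
def phiSE (a b t : ℝ) : ℝ := Real.log ((t - a)/(b - t))

/-- The double-exponential (DE) transformation. -/
def psiDE (a b x : ℝ) : ℝ := (b - a)/2 * Real.tanh (Real.pi/2 * Real.sinh x) + (b + a)/2

/-- The inverse of the DE transformation. -/
def phiDE (a b t : ℝ) : ℝ := Real.arsinh (1/Real.pi * Real.log ((t - a)/(b - t)))

/-- The SE transformation as a complex map. -/
def psiSEC (a b : ℝ) (z : ℂ) : ℂ :=
  (((b : ℂ) - (a : ℂ))/2) * Complex.tanh (z/2) + ((b : ℂ) + (a : ℂ))/2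

/-- The DE transformation as a complex map. -/
def psiDEC (a b : ℝ) (z : ℂ) : ℂ :=
  (((b : ℂ) - (a : ℂ))/2) * Complex.tanh (((Real.pi : ℂ))/2 * Complex.sinh z) + ((b : ℂ) + (a : ℂ))/2

/-- The strip `D_d = {ζ : |Im ζ| < d}`. -/
def Dstrip (d : ℝ) : Set ℂ := {z : ℂ | |z.im| < d}

/-- `D = ψ^SE(D_d)`. -/
def DSE (a b d : ℝ) : Set ℂ := psiSEC a b '' Dstrip d

def omA (a b t : ℝ) : ℝ := (b - t)/(b - a)

def omB (a b t : ℝ) : ℝ := (t - a)/(b - a)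

/-- The SE collocation points `t_j^SE = ψ^SE(jh)`. -/
def tSE (a b h : ℝ) (j : ℤ) : ℝ := psiSE a b ((j : ℝ) * h)

/-- The DE collocation points `t_j^DE = ψ^DE(jh)`. -/
def tDE (a b h : ℝ) (j : ℤ) : ℝ := psiDE a b ((j : ℝ) * h)

/-- `δ_m^{(-1)} = 1/2 + (1/π) Si(π m)`. -/
def deltaM (m : ℤ) : ℝ := 1/2 + (1/Real.pi) * Si (Real.pi * (m : ℝ))

/-- `J(j,h)(φ^SE(t))`, extended continuously to `t = a` (value 0) and `t = b` (value h). -/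
def JSEext (a b h : ℝ) (j : ℤ) (t : ℝ) : ℝ :=
  if t ≤ a then 0 else if b ≤ t then h else Jfun j h (phiSE a b t)

/-- `J(j,h)(φ^DE(t))`, extended continuously to `t = a` (value 0) and `t = b` (value h). -/
def JDEext (a b h : ℝ) (j : ℤ) (t : ℝ) : ℝ :=
  if t ≤ a then 0 else if b ≤ t then h else Jfun j h (phiDE a b t)

/-- The operator `V_N^SE`, with the continuous extension to `t = a, b` built in. -/
def VNSE (a b h : ℝ) (N : ℕ) (k : ℝ → ℝ → ℂ) (f : ℝ → ℂ) (t : ℝ) : ℂ :=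
  ∑ j ∈ Finset.Icc (-(N:ℤ)) (N:ℤ),
    k t (tSE a b h j) * f (tSE a b h j) * ((deriv (psiSE a b) ((j : ℝ) * h) : ℝ) : ℂ)
      * ((JSEext a b h j t : ℝ) : ℂ)

/-- The operator `V_N^DE`, with the continuous extension to `t = a, b` built in. -/
def VNDE (a b h : ℝ) (N : ℕ) (k : ℝ → ℝ → ℂ) (f : ℝ → ℂ) (t : ℝ) : ℂ :=
  ∑ j ∈ Finset.Icc (-(N:ℤ)) (N:ℤ),
    k t (tDE a b h j) * f (tDE a b h j) * ((deriv (psiDE a b) ((j : ℝ) * h) : ℝ) : ℂ)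
      * ((JDEext a b h j t : ℝ) : ℂ)

/-- The generalized SE-Sinc approximation operator `P_N^SE`. -/
def PNSE (a b h : ℝ) (N : ℕ) (f : ℝ → ℂ) (t : ℝ) : ℂ :=
  if t ≤ a then f (tSE a b h (-(N:ℤ)))
  else if b ≤ t then f (tSE a b h (N:ℤ))
  else f (tSE a b h (-(N:ℤ))) * ((omA a b t : ℝ) : ℂ) + f (tSE a b h (N:ℤ)) * ((omB a b t : ℝ) : ℂ)
    + ∑ j ∈ Finset.Icc (-(N:ℤ)) (N:ℤ),
        (f (tSE a b h j) - f (tSE a b h (-(N:ℤ))) * ((omA a b (tSE a b h j) : ℝ) : ℂ)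
          - f (tSE a b h (N:ℤ)) * ((omB a b (tSE a b h j) : ℝ) : ℂ))
          * ((sincF j h (phiSE a b t) : ℝ) : ℂ)

/-- The generalized DE-Sinc approximation operator `P_N^DE`. -/
def PNDE (a b h : ℝ) (N : ℕ) (f : ℝ → ℂ) (t : ℝ) : ℂ :=
  if t ≤ a then f (tDE a b h (-(N:ℤ)))
  else if b ≤ t then f (tDE a b h (N:ℤ))
  else f (tDE a b h (-(N:ℤ))) * ((omA a b t : ℝ) : ℂ) + f (tDE a b h (N:ℤ)) * ((omB a b t : ℝ) : ℂ)
    + ∑ j ∈ Finset.Icc (-(N:ℤ)) (N:ℤ),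
        (f (tDE a b h j) - f (tDE a b h (-(N:ℤ))) * ((omA a b (tDE a b h j) : ℝ) : ℂ)
          - f (tDE a b h (N:ℤ)) * ((omB a b (tDE a b h j) : ℝ) : ℂ))
          * ((sincF j h (phiDE a b t) : ℝ) : ℂ)

/-- `Δ_N = ω_a(t_{-N})ω_b(t_N) - ω_b(t_{-N})ω_a(t_N)`. -/
def DeltaN (a b h : ℝ) (N : ℕ) : ℝ :=
  omA a b (tSE a b h (-(N:ℤ))) * omB a b (tSE a b h (N:ℤ))
    - omB a b (tSE a b h (-(N:ℤ))) * omA a b (tSE a b h (N:ℤ))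

def betaN (a b h : ℝ) (N : ℕ) (f : ℝ → ℂ) : ℂ :=
  (f (tSE a b h (-(N:ℤ))) * ((omB a b (tSE a b h (N:ℤ)) : ℝ) : ℂ)
    - f (tSE a b h (N:ℤ)) * ((omB a b (tSE a b h (-(N:ℤ))) : ℝ) : ℂ)) / ((DeltaN a b h N : ℝ) : ℂ)

def gammaN (a b h : ℝ) (N : ℕ) (f : ℝ → ℂ) : ℂ :=
  (f (tSE a b h (N:ℤ)) * ((omA a b (tSE a b h (-(N:ℤ))) : ℝ) : ℂ)
    - f (tSE a b h (-(N:ℤ))) * ((omA a b (tSE a b h (N:ℤ)) : ℝ) : ℂ)) / ((DeltaN a b h N : ℝ) : ℂ)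

/-- The Rashidinia–Zarebnia interpolation operator `P_N^RZ`. -/
def PNRZ (a b h : ℝ) (N : ℕ) (f : ℝ → ℂ) (t : ℝ) : ℂ :=
  if t ≤ a then betaN a b h N f
  else if b ≤ t then gammaN a b h N f
  else betaN a b h N f * ((omA a b t : ℝ) : ℂ) + gammaN a b h N f * ((omB a b t : ℝ) : ℂ)
    + ∑ j ∈ Finset.Icc (-(N:ℤ)+1) ((N:ℤ)-1),
        (f (tSE a b h j) - betaN a b h N f * ((omA a b (tSE a b h j) : ℝ) : ℂ)
          - gammaN a b h N f * ((omB a b (tSE a b h j) : ℝ) : ℂ))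
          * ((sincF j h (phiSE a b t) : ℝ) : ℂ)

/-- Reindexing `Fin (2N+1)` as `{-N, …, N}`. -/
def zidx (N : ℕ) (i : Fin (2*N+1)) : ℤ := ((i : ℕ) : ℤ) - (N : ℤ)

/-- The matrix `V_n^SE`. -/
def VnSE (a b h : ℝ) (N : ℕ) (k : ℝ → ℝ → ℂ) : Matrix (Fin (2*N+1)) (Fin (2*N+1)) ℂ :=
  Matrix.of fun i j =>
    k (tSE a b h (zidx N i)) (tSE a b h (zidx N j))
      * ((deriv (psiSE a b) ((zidx N j : ℝ) * h) : ℝ) : ℂ) * ((h : ℝ) : ℂ)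
      * ((deltaM (zidx N i - zidx N j) : ℝ) : ℂ)

/-- The matrix `V_n^DE`. -/
def VnDE (a b h : ℝ) (N : ℕ) (k : ℝ → ℝ → ℂ) : Matrix (Fin (2*N+1)) (Fin (2*N+1)) ℂ :=
  Matrix.of fun i j =>
    k (tDE a b h (zidx N i)) (tDE a b h (zidx N j))
      * ((deriv (psiDE a b) ((zidx N j : ℝ) * h) : ℝ) : ℂ) * ((h : ℝ) : ℂ)
      * ((deltaM (zidx N i - zidx N j) : ℝ) : ℂ)

/-- The right-hand-side vector `g_n^SE`. -/
def gnSE (a b h : ℝ) (N : ℕ) (g : ℝ → ℂ) : Fin (2*N+1) → ℂ := fun i => g (tSE a b h (zidx N i))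

/-- The right-hand-side vector `g_n^DE`. -/
def gnDE (a b h : ℝ) (N : ℕ) (g : ℝ → ℂ) : Fin (2*N+1) → ℂ := fun i => g (tDE a b h (zidx N i))

/-- The matrix `E_n^RZ`. -/
def EnRZ (a b h : ℝ) (N : ℕ) : Matrix (Fin (2*N+1)) (Fin (2*N+1)) ℂ :=
  Matrix.of fun i j =>
    if (j : ℕ) = 0 then ((omA a b (tSE a b h (zidx N i)) : ℝ) : ℂ)
    else if (j : ℕ) = 2*N then ((omB a b (tSE a b h (zidx N i)) : ℝ) : ℂ)
    else if i = j then 1 else 0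

/-- The matrix `V_n^RZ`. -/
def VnRZ (a b h : ℝ) (N : ℕ) (k : ℝ → ℝ → ℂ) : Matrix (Fin (2*N+1)) (Fin (2*N+1)) ℂ :=
  Matrix.of fun i j =>
    if (j : ℕ) = 0 then VNSE a b h N k (fun t => ((omA a b t : ℝ) : ℂ)) (tSE a b h (zidx N i))
    else if (j : ℕ) = 2*N then VNSE a b h N k (fun t => ((omB a b t : ℝ) : ℂ)) (tSE a b h (zidx N i))
    else k (tSE a b h (zidx N i)) (tSE a b h (zidx N j))
      * ((deriv (psiSE a b) ((zidx N j : ℝ) * h) : ℝ) : ℂ) * ((h : ℝ) : ℂ)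
      * ((deltaM (zidx N i - zidx N j) : ℝ) : ℂ)

/-- The SE-Sinc-Nyström solution `u_N^SE` built from a solution vector `u` of the
linear system, with the continuous extension to the endpoints built in. -/
def uNSEf (a b h : ℝ) (N : ℕ) (k : ℝ → ℝ → ℂ) (g : ℝ → ℂ) (u : Fin (2*N+1) → ℂ) (t : ℝ) : ℂ :=
  g t + ∑ i : Fin (2*N+1),
    k t (tSE a b h (zidx N i)) * u i * ((deriv (psiSE a b) ((zidx N i : ℝ) * h) : ℝ) : ℂ)
      * ((JSEext a b h (zidx N i) t : ℝ) : ℂ)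

/-- The DE-Sinc-Nyström solution `u_N^DE` built from a solution vector `u` of the
linear system, with the continuous extension to the endpoints built in. -/
def uNDEf (a b h : ℝ) (N : ℕ) (k : ℝ → ℝ → ℂ) (g : ℝ → ℂ) (u : Fin (2*N+1) → ℂ) (t : ℝ) : ℂ :=
  g t + ∑ i : Fin (2*N+1),
    k t (tDE a b h (zidx N i)) * u i * ((deriv (psiDE a b) ((zidx N i : ℝ) * h) : ℝ) : ℂ)
      * ((JDEext a b h (zidx N i) t : ℝ) : ℂ)

/-- The Rashidinia–Zarebnia SE-Sinc-collocation solution `w_N^RZ` built from a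
coefficient vector `c`, with the continuous extension to the endpoints built in. -/
def wRZf (a b h : ℝ) (N : ℕ) (c : Fin (2*N+1) → ℂ) (t : ℝ) : ℂ :=
  if t ≤ a then c ⟨0, by omega⟩
  else if b ≤ t then c ⟨2*N, by omega⟩
  else c ⟨0, by omega⟩ * ((omA a b t : ℝ) : ℂ) + c ⟨2*N, by omega⟩ * ((omB a b t : ℝ) : ℂ)
    + ∑ j ∈ Finset.univ.filter (fun j : Fin (2*N+1) => (j : ℕ) ≠ 0 ∧ (j : ℕ) ≠ 2*N),
        c j * ((sincF (zidx N j) h (phiSE a b t) : ℝ) : ℂ)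

/-- The SE mesh size `h = √(πd/(αN))`. -/
def hstepSE (α d : ℝ) (N : ℕ) : ℝ := Real.sqrt (Real.pi * d / (α * N))

/-- The DE mesh size `h = log(2dN/α)/N`. -/
def hstepDE (α d : ℝ) (N : ℕ) : ℝ := Real.log (2*d*N/α) / N

/-- `ω_b ∘ ψ^SE` is the logistic function. -/
theorem omB_tSE {a b : ℝ} (hab : a < b) (h : ℝ) (j : ℤ) :
    omB a b (tSE a b h j) = Real.exp (j * h) / (Real.exp (j * h) + 1) := by
  have hba : b - a ≠ 0 := (sub_pos.2 hab).ne'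
  have hsq : Real.exp (j * h) = Real.exp (j * h / 2) ^ 2 := by
    rw [← Real.exp_nat_mul]
    congr 1
    push_cast
    ring
  have hpos := Real.exp_pos (j * h / 2)
  unfold omB tSE psiSE
  rw [Real.tanh_eq, Real.exp_neg, hsq]
  generalize Real.exp (j * h / 2) = y at hpos
  field_simp
  ring

theorem omA_tSE {a b : ℝ} (hab : a < b) (h : ℝ) (j : ℤ) :
    omA a b (tSE a b h j) = 1 / (Real.exp (j * h) + 1) := by
  have hba : b - a ≠ 0 := (sub_pos.2 hab).ne'
  have hsum : omA a b (tSE a b h j) = 1 - omB a b (tSE a b h j) := by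
    unfold omA omB
    field_simp
    ring
  have hpos := Real.exp_pos (j * h)
  rw [hsum, omB_tSE hab]
  field_simp
  ring

theorem tSE_mem_Icc {a b : ℝ} (hab : a < b) (h : ℝ) (j : ℤ) :
    tSE a b h j ∈ Set.Icc a b := by
  have hba : 0 < b - a := sub_pos.2 hab
  have hA : 0 ≤ omA a b (tSE a b h j) := by
    rw [omA_tSE hab]
    positivity
  have hB : 0 ≤ omB a b (tSE a b h j) := by
    rw [omB_tSE hab]
    positivity
  unfold omA at hA
  unfold omB at hB
  rw [le_div_iff₀ hba, zero_mul] at hA hB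
  exact ⟨sub_nonneg.1 hB, sub_nonneg.1 hA⟩

/-- explicit identities for `f(t_{-N}) - β_N(f)` and
`f(t_N) - γ_N(f)`, with the resulting bounds. -/
theorem betaN_gammaN_identities
    (a b h : ℝ) (N : ℕ) (hab : a < b) (hN : 0 < N) (hh : 0 < h)
    (f : ℝ → ℂ) (hf : ContinuousOn f (Set.Icc a b)) :
    f (tSE a b h (-(N:ℤ))) - betaN a b h N f
        = (f (tSE a b h (N:ℤ)) - f (tSE a b h (-(N:ℤ))))
            / (((Real.exp ((N : ℝ) * h) - 1 : ℝ)) : ℂ) ∧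
    f (tSE a b h (N:ℤ)) - gammaN a b h N f
        = (f (tSE a b h (-(N:ℤ))) - f (tSE a b h (N:ℤ)))
            / (((Real.exp ((N : ℝ) * h) - 1 : ℝ)) : ℂ) ∧
    ∀ M : ℝ, (∀ t ∈ Set.Icc a b, ‖f t‖ ≤ M) →
      ‖f (tSE a b h (-(N:ℤ))) - betaN a b h N f‖ ≤ 2 * M / (Real.exp ((N : ℝ) * h) - 1) ∧
      ‖f (tSE a b h (N:ℤ)) - gammaN a b h N f‖ ≤ 2 * M / (Real.exp ((N : ℝ) * h) - 1) := by
  have hE1 : 1 < Real.exp ((N : ℝ) * h) := Real.one_lt_exp_iff.2 (by positivity)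
  have hEpos : 0 < Real.exp ((N : ℝ) * h) - 1 := sub_pos.2 hE1
  have hneg : Real.exp (((-(N : ℤ) : ℤ) : ℝ) * h) = (Real.exp ((N : ℝ) * h))⁻¹ := by
    rw [← Real.exp_neg]
    congr 1
    push_cast
    ring
  have hposN : Real.exp ((((N : ℤ) : ℤ) : ℝ) * h) = Real.exp ((N : ℝ) * h) := by
    push_cast
    rfl
  have hBp := omB_tSE hab h (N : ℤ)
  have hAp := omA_tSE hab h (N : ℤ)
  have hBm := omB_tSE hab h (-(N : ℤ))
  have hAm := omA_tSE hab h (-(N : ℤ))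
  have htp := tSE_mem_Icc hab h (N : ℤ)
  have htm := tSE_mem_Icc hab h (-(N : ℤ))
  rw [hposN] at hBp hAp
  rw [hneg] at hBm hAm
  generalize Real.exp ((N : ℝ) * h) = E at *
  have hE0 : E ≠ 0 := by linarith
  have hEp : E + 1 ≠ 0 := by linarith
  have hBm' : omB a b (tSE a b h (-(N : ℤ))) = 1 / (E + 1) := by
    rw [hBm]
    field_simp
    ring
  have hAm' : omA a b (tSE a b h (-(N : ℤ))) = E / (E + 1) := by
    rw [hAm]
    field_simp
    ring
  have hD : DeltaN a b h N = (E - 1) / (E + 1) := by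
    unfold DeltaN
    rw [hAm', hBp, hBm', hAp]
    field_simp
    ring
  have hEpC : (E : ℂ) + 1 ≠ 0 := by exact_mod_cast hEp
  have hEmC : (E : ℂ) - 1 ≠ 0 := by exact_mod_cast hEpos.ne'
  have hbeta : f (tSE a b h (-(N:ℤ))) - betaN a b h N f
      = (f (tSE a b h (N:ℤ)) - f (tSE a b h (-(N:ℤ)))) / ((E - 1 : ℝ) : ℂ) := by
    unfold betaN
    rw [hD, hBp, hBm']
    push_cast
    field_simp
    ring
  have hgamma : f (tSE a b h (N:ℤ)) - gammaN a b h N f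
      = (f (tSE a b h (-(N:ℤ))) - f (tSE a b h (N:ℤ))) / ((E - 1 : ℝ) : ℂ) := by
    unfold gammaN
    rw [hD, hAp, hAm']
    push_cast
    field_simp
    ring
  refine ⟨hbeta, hgamma, fun M hM => ?_⟩
  have h1 := hM _ htp
  have h2 := hM _ htm
  rw [hbeta, hgamma, norm_div, norm_div, Complex.norm_real, Real.norm_of_nonneg hEpos.le]
  constructor
  · gcongr
    exact (norm_sub_le _ _).trans (by linarith)
  · gcongr
    exact (norm_sub_le _ _).trans (by linarith)

end

end SincVolterra
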